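/- arXiv:2203.08505 — 2 statements merged into one kernel-verified Lean document; each statement's English description precedes it below -/
import Mathlib

section
/- Let γ ∈ ℝ, let n ≥ m ≥ 3 be integers, and let Z_1,…,Z_n be independent standard GP(γ) random variables. Define the Pickands kernel K_P(y_1,y_2,y_3) = ln((y_1−y_2)²/((y_1−y_3)(y_2−y_3))) for y_1 > y_2 > y_3, and K_{P,m}(x_1,…,x_m) = K_P(x_{m:m}, x_{m−1:m}, x_{m−2:m}). Then E[K_{P,m}(Z_1,…,Z_m)] = γ; consequently the U-statistic C(n,m)^{−1} Σ_{I ⊂ [n], |I| = m} K_{P,m}(Z_I) is an unbiased estimator of γ. -/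
open MeasureTheory ProbabilityTheory Filter Real Set Topology
open scoped ENNReal NNReal Classical

noncomputable section

/-- The `j`-th largest entry of the tuple `x` (`j = 0` gives the maximum, `j = 1` the
second largest, ...); `0` when `j` is out of range. -/
def descStat {m : ℕ} (x : Fin m → ℝ) (j : ℕ) : ℝ :=
  if h : j < m then (x ∘ Tuple.sort x) ⟨m - 1 - j, by omega⟩ else 0

/-- The kernel of degree `m` obtained from `K` by applying it to the top-`q`
(descending) order statistics: `K_m(x_1,…,x_m) = K(x_{m:m},…,x_{m−q+1:m})`. -/
def Km {q : ℕ} (K : (Fin q → ℝ) → ℝ) (m : ℕ) (x : Fin m → ℝ) : ℝ :=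
  K fun j => descStat x (j : ℕ)

/-- `K(a x_1 + b, …, a x_q + b) = K(x_1, …, x_q)` for all `a > 0`, `b ∈ ℝ`. -/
def LocScaleInvariant {q : ℕ} (K : (Fin q → ℝ) → ℝ) : Prop :=
  ∀ a b : ℝ, 0 < a → ∀ x : Fin q → ℝ, K (fun j => a * x j + b) = K x

/-- `h_γ(y) = (y^γ - 1)/γ`, interpreted as `log y` when `γ = 0`. -/
def hGamma (γ : ℝ) (y : ℝ) : ℝ := if γ = 0 then Real.log y else (y ^ γ - 1) / γ

lemma measurable_hGamma (γ : ℝ) : Measurable (hGamma γ) := by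
  unfold hGamma
  split_ifs
  · exact Real.measurable_log
  · fun_prop

/-- The uniform distribution on `(0,1)`. -/
def unif01 : Measure ℝ := volume.restrict (Set.Ioo (0:ℝ) 1)

instance : IsProbabilityMeasure unif01 := ⟨by simp [unif01]⟩

/-- The standard Pareto(1) distribution, with cdf `1 - 1/y` for `y ≥ 1`. -/
def pareto1 : Measure ℝ := ProbabilityTheory.paretoMeasure 1 1

instance : IsProbabilityMeasure pareto1 :=
  ProbabilityTheory.isProbabilityMeasure_paretoMeasure one_pos one_pos

/-- The standard generalized Pareto distribution `GP(γ)`: the law of `h_γ(Y)` for `Y`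
standard Pareto(1). -/
def gpMeasure (γ : ℝ) : Measure ℝ := pareto1.map (hGamma γ)

instance (γ : ℝ) : IsProbabilityMeasure (gpMeasure γ) :=
  Measure.isProbabilityMeasure_map (measurable_hGamma γ).aemeasurable

/-- The unit exponential distribution: the law of `-log U` for `U` uniform on `(0,1)`. -/
def expMeasure1 : Measure ℝ := unif01.map fun u => -Real.log u

instance : IsProbabilityMeasure expMeasure1 :=
  Measure.isProbabilityMeasure_map Real.measurable_log.neg.aemeasurable

/-- The Erlang(q) distribution: the law of the sum of `q` independent unit exponentials. -/
def erlangMeasure (q : ℕ) : Measure ℝ :=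
  (Measure.pi fun _ : Fin q => expMeasure1).map fun e => ∑ i, e i

instance (q : ℕ) : IsProbabilityMeasure (erlangMeasure q) :=
  Measure.isProbabilityMeasure_map
    (Finset.measurable_sum _ fun i _ => measurable_pi_apply i).aemeasurable

/-- The joint law of `r` iid `GP(γ)` random variables. -/
def gpPi (γ : ℝ) (r : ℕ) : Measure (Fin r → ℝ) := Measure.pi fun _ => gpMeasure γ

instance (γ : ℝ) (r : ℕ) : IsProbabilityMeasure (gpPi γ r) := by
  unfold gpPi; infer_instance

/-- The vector `(Z_{q-j:q-1})_{j=1}^{q}`: the descending order statistics of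
`z_1,…,z_{q-1}` with an extra last entry `Z_{0:q-1} := 0`. -/
def refVec {q : ℕ} (z : Fin (q-1) → ℝ) : Fin q → ℝ := fun j => descStat z (j : ℕ)

/-- `θ = E[K((Z_{q-j:q-1})_{j=1}^{q})]` for iid `GP(γ)` variables `Z_1,…,Z_{q-1}`. -/
def thetaK (γ : ℝ) {q : ℕ} (K : (Fin q → ℝ) → ℝ) : ℝ :=
  ∫ z, K (refVec z) ∂(gpPi γ (q-1))

/-- all moments of `K((Z_{q-j:q-1})_{j=1}^{q})` are finite. -/
def MomentCond (γ : ℝ) {q : ℕ} (K : (Fin q → ℝ) → ℝ) : Prop :=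
  ∀ p : ℝ, 0 < p →
    ∫⁻ z, ENNReal.ofReal (|K (refVec z)| ^ p) ∂(gpPi γ (q-1)) < ⊤

/-- The asymptotic variance
`σ²_K(γ) = ∫_0^∞ (E[K̄_{q+1}((Z_{q-j:q-1})_{j=1}^q, h_γ(S_q/x))])² dx`. -/
def sigmaSqK (γ : ℝ) {q : ℕ} (K : (Fin q → ℝ) → ℝ) : ℝ :=
  ∫ x in Set.Ioi (0:ℝ),
    (∫ zs : (Fin (q-1) → ℝ) × ℝ,
        (Km K (q+1) (Fin.snoc (refVec zs.1) (hGamma γ (zs.2 / x))) - thetaK γ K)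
      ∂((gpPi γ (q-1)).prod (erlangMeasure q))) ^ 2

/-- The U-statistic with kernel `K_m` evaluated on the sample `z`. -/
def UStat {q : ℕ} (K : (Fin q → ℝ) → ℝ) (m n : ℕ) (z : Fin n → ℝ) : ℝ :=
  ((n.choose m : ℝ))⁻¹ *
    ∑ I ∈ Finset.powersetCard m (Finset.univ : Finset (Fin n)),
      Km K I.card fun j => z (I.orderIsoOfFin rfl j).1

/-- Condition on the degree sequence: `m = o(n^{1-ε})` and `log n = o(m^{1-δ})`. -/
def DegreeCond (m : ℕ → ℕ) : Prop :=
  ∃ ε > (0:ℝ), ∃ δ > (0:ℝ),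
    Tendsto (fun n => (m n : ℝ) / (n : ℝ) ^ (1 - ε)) atTop (𝓝 0) ∧
    Tendsto (fun n : ℕ => Real.log n / (m n : ℝ) ^ (1 - δ)) atTop (𝓝 0)

/-- `ζ_{m,ℓ} = cov(K_m(Z_S), K_m(Z_{S'}))` for the blocks `S = [1:m]`,
`S' = [(m-ℓ+1):(2m-ℓ)]` (zero-indexed here), which overlap in `ℓ` indices. -/
def zetaCov {Ω : Type*} [MeasurableSpace Ω] (P : Measure Ω) {q : ℕ}
    (K : (Fin q → ℝ) → ℝ) (Z : ℕ → Ω → ℝ) (m ℓ : ℕ) : ℝ :=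
  (∫ ω, Km K m (fun i : Fin m => Z i ω) * Km K m (fun i : Fin m => Z (m - ℓ + i) ω) ∂P)
    - (∫ ω, Km K m (fun i : Fin m => Z i ω) ∂P)
      * (∫ ω, Km K m (fun i : Fin m => Z (m - ℓ + i) ω) ∂P)

/-- Convergence in distribution to a Gaussian, expressed via pointwise convergence of
the cumulative distribution functions (the Gaussian cdf being continuous). -/
def TendstoGaussian {Ω : Type*} [MeasurableSpace Ω] (P : Measure Ω)
    (T : ℕ → Ω → ℝ) (μ : ℝ) (v : ℝ≥0) : Prop :=
  ∀ x : ℝ, Tendsto (fun n => (P {ω | T n ω ≤ x}).toReal) atTop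
    (𝓝 ((gaussianReal μ v (Set.Iic x)).toReal))

/-- Convergence in probability to the constant `c`. -/
def TendstoInProb {Ω : Type*} [MeasurableSpace Ω] (P : Measure Ω)
    (T : ℕ → Ω → ℝ) (c : ℝ) : Prop :=
  ∀ ε : ℝ, 0 < ε → Tendsto (fun n => (P {ω | ε ≤ |T n ω - c|}).toReal) atTop (𝓝 0)


/-- The Pickands kernel `K_P(y₁,y₂,y₃) = ln((y₁-y₂)²/((y₁-y₃)(y₂-y₃)))`. -/
def KP : (Fin 3 → ℝ) → ℝ :=
  fun y => Real.log ((y 0 - y 1) ^ 2 / ((y 0 - y 2) * (y 1 - y 2)))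

/-!
Write `Z_i = h_γ(1/U_i)` with `U_i` uniform on `(0,1)`. Large `Z_i` correspond to small `U_i`, and
by exchangeability only the event that the `U_i` are sorted matters. On that event, given the
third smallest value `c`, the two smaller ones divided by `c` are again a sorted pair of
independent uniforms `s < t`, whatever `m` is. Since `h_γ(a) - h_γ(b) = b^γ h_γ(a/b)`, the kernel
depends only on `(s, t)`: with `Q_γ(u) = h_γ(1/u)` it equals
`log Q_γ(s/t) + log Q_{-γ}(s/t) - log Q_{-γ}(s) - log Q_{-γ}(t)`.
The ratio `s/t` is uniform and `{s, t}` is an unordered pair of independent uniforms, so the mean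
is `E[log Q_γ(U)] - E[log Q_{-γ}(U)]`, which is `-γ E[log U] = γ` because
`h_γ(y) = y^γ h_{-γ}(y)`.
-/

section OrderStatistics

variable {m : ℕ}

lemma descStat_comp_perm (x : Fin m → ℝ) (σ : Equiv.Perm (Fin m)) (j : ℕ) :
    descStat (x ∘ σ) j = descStat x j := by
  simp only [descStat, Tuple.comp_perm_comp_sort_eq_comp_sort]

lemma Km_comp_perm {q : ℕ} (K : (Fin q → ℝ) → ℝ) (x : Fin m → ℝ) (σ : Equiv.Perm (Fin m)) :
    Km K m (x ∘ σ) = Km K m x := by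
  simp only [Km, descStat_comp_perm]

lemma descStat_of_antitone {x : Fin m → ℝ} (hx : Antitone x) {j : ℕ} (hj : j < m) :
    descStat x j = x ⟨j, hj⟩ := by
  have hsort : x ∘ Fin.revPerm = x ∘ Tuple.sort x :=
    Tuple.comp_sort_eq_comp_iff_monotone.2 (hx.comp fun _ _ h => Fin.rev_le_rev.2 h)
  rw [descStat, dif_pos hj, ← hsort, Function.comp_apply]
  congr 1
  ext
  simp only [Fin.revPerm_apply, Fin.val_rev]
  omega

lemma Km_of_antitone {q : ℕ} (K : (Fin q → ℝ) → ℝ) (hqm : q ≤ m) {x : Fin m → ℝ}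
    (hx : Antitone x) : Km K m x = K fun j => x (Fin.castLE hqm j) :=
  congrArg K <| funext fun j => descStat_of_antitone hx (j.2.trans_le hqm)

lemma continuous_comp_sort {α : Type*} [LinearOrder α] [TopologicalSpace α]
    [OrderClosedTopology α] : Continuous fun x : Fin m → α => x ∘ Tuple.sort x := by
  refine (locallyFinite_of_finite fun σ : Equiv.Perm (Fin m) =>
    {x : Fin m → α | Monotone (x ∘ σ)}).continuous ?_ (fun σ => ?_) fun σ => ?_
  · exact iUnion_eq_univ_iff.2 fun x => ⟨Tuple.sort x, Tuple.monotone_sort x⟩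
  · exact isClosed_monotone.preimage (f := fun x : Fin m → α => x ∘ σ) (by fun_prop)
  · have hσ : Continuous fun x : Fin m → α => x ∘ σ := by fun_prop
    exact hσ.continuousOn.congr fun x hx => (Tuple.comp_sort_eq_comp_iff_monotone.2 hx).symm

lemma continuous_descStat (j : ℕ) : Continuous fun x : Fin m → ℝ => descStat x j := by
  unfold descStat
  split_ifs
  · exact (continuous_apply _).comp continuous_comp_sort
  · exact continuous_const

lemma measurable_Km {q : ℕ} {K : (Fin q → ℝ) → ℝ} (hK : Measurable K) : Measurable (Km K m) :=
  hK.comp (measurable_pi_lambda _ fun j => (continuous_descStat j).measurable)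

lemma exists_perm_strictMono_comp {α : Type*} [LinearOrder α] {x : Fin m → α}
    (hx : Function.Injective x) : ∃ σ : Equiv.Perm (Fin m), StrictMono (x ∘ σ) :=
  ⟨Tuple.sort x,
    (Tuple.monotone_sort x).strictMono_of_injective (hx.comp (Tuple.sort x).injective)⟩

lemma perm_eq_of_strictMono_comp {α : Type*} [PartialOrder α] {x : Fin m → α}
    {σ τ : Equiv.Perm (Fin m)} (hσ : StrictMono (x ∘ σ)) (hτ : StrictMono (x ∘ τ)) : σ = τ := by
  have hx : Function.Injective x := (Equiv.injective_comp σ x).1 hσ.injective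
  exact Equiv.ext fun i => hx (congrFun (Tuple.unique_monotone hσ.monotone hτ.monotone) i)

end OrderStatistics

section Exchangeability

lemma measurePreserving_pi_comp_perm {ι α : Type*} [Fintype ι] [MeasurableSpace α]
    (μ : Measure α) [SigmaFinite μ] (σ : Equiv.Perm ι) :
    MeasurePreserving (fun x : ι → α => x ∘ σ) (Measure.pi fun _ => μ) (Measure.pi fun _ => μ) :=
  (measurePreserving_piCongrLeft (fun _ => μ) σ).symm

lemma measurableEmbedding_comp_perm {ι α : Type*} [MeasurableSpace α] (σ : Equiv.Perm ι) :
    MeasurableEmbedding (fun x : ι → α => x ∘ σ) :=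
  (MeasurableEquiv.piCongrLeft (fun _ => α) σ).symm.measurableEmbedding

lemma ae_prod_fst_ne_snd {α : Type*} [MeasurableSpace α] [MeasurableEq α] (μ ν : Measure α)
    [SFinite ν] [NullSingletonClass ν] : ∀ᵐ p ∂μ.prod ν, p.1 ≠ p.2 := by
  have hdiag : μ.prod ν (diagonal α) = 0 :=
    Measure.measure_prod_null_of_ae_null measurableSet_diagonal <| ae_of_all _ fun a => by
      simp [preimage, diagonal]
  simpa only [ae_iff, not_not, diagonal] using hdiag

lemma ae_injective_pi {ι α : Type*} [Fintype ι] [MeasurableSpace α] [MeasurableEq α]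
    (μ : Measure α) [IsProbabilityMeasure μ] [NullSingletonClass μ] :
    ∀ᵐ x ∂Measure.pi fun _ : ι => μ, Function.Injective x := by
  have hne (i j : ι) (hij : i ≠ j) : ∀ᵐ x ∂Measure.pi fun _ : ι => μ, x i ≠ x j := by
    have hindep : IndepFun (fun x : ι → α => x i) (fun x => x j) (Measure.pi fun _ => μ) :=
      (iIndepFun_pi (X := fun _ => id) fun _ => aemeasurable_id).indepFun hij
    have hlaw : (Measure.pi fun _ : ι => μ).map (fun x => (x i, x j)) = μ.prod μ := by
      rw [(indepFun_iff_map_prod_eq_prod_map_map (measurable_pi_apply i).aemeasurable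
          (measurable_pi_apply j).aemeasurable).1 hindep,
        (measurePreserving_eval (fun _ : ι => μ) i).map_eq,
        (measurePreserving_eval (fun _ : ι => μ) j).map_eq]
    have hmap := hlaw ▸ ae_prod_fst_ne_snd μ μ
    exact ae_of_ae_map ((measurable_pi_apply i).prodMk (measurable_pi_apply j)).aemeasurable hmap
  simp only [Function.Injective, ae_all_iff]
  intro i j
  by_cases hij : i = j
  · exact ae_of_all _ fun _ _ => hij
  · filter_upwards [hne i j hij] with x hx h using absurd h hx

variable {α : Type*} [LinearOrder α] [MeasurableSpace α] {m : ℕ}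

section Measurability

variable [TopologicalSpace α] [OrderClosedTopology α] [SecondCountableTopology α]
  [OpensMeasurableSpace α]

lemma measurableSet_setOf_strictMono : MeasurableSet {x : Fin m → α | StrictMono x} := by
  simp only [StrictMono, ofPred_forall]
  exact .iInter fun i => .iInter fun j => .iInter fun _ =>
    measurableSet_lt (measurable_pi_apply i) (measurable_pi_apply j)

end Measurability

variable (μ : Measure α) [IsProbabilityMeasure μ] {E : Type*} [NormedAddCommGroup E]
  {F : (Fin m → α) → E}

lemma integrableOn_strictMono_comp_perm (hF : ∀ x (σ : Equiv.Perm (Fin m)), F (x ∘ σ) = F x)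
    (hint : IntegrableOn F {x | StrictMono x} (Measure.pi fun _ => μ))
    (σ : Equiv.Perm (Fin m)) :
    IntegrableOn F ((fun x => x ∘ σ) ⁻¹' {x | StrictMono x}) (Measure.pi fun _ => μ) := by
  have hFσ : F ∘ (fun x => x ∘ σ) = F := funext fun x => hF x σ
  rw [← hFσ]
  exact ((measurePreserving_pi_comp_perm μ σ).integrableOn_comp_preimage
    (measurableEmbedding_comp_perm σ)).2 hint

variable [MeasurableEq α] [NullSingletonClass μ]

lemma restrict_iUnion_strictMono_comp_perm :
    (Measure.pi fun _ : Fin m => μ).restrict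
        (⋃ σ : Equiv.Perm (Fin m), (fun x => x ∘ σ) ⁻¹' {x | StrictMono x}) =
      Measure.pi fun _ => μ := by
  refine Measure.restrict_eq_self_of_ae_mem ?_
  filter_upwards [ae_injective_pi μ] with x hx using mem_iUnion.2 (exists_perm_strictMono_comp hx)

lemma integrable_pi_of_integrableOn_strictMono
    (hF : ∀ x (σ : Equiv.Perm (Fin m)), F (x ∘ σ) = F x)
    (hint : IntegrableOn F {x | StrictMono x} (Measure.pi fun _ => μ)) :
    Integrable F (Measure.pi fun _ => μ) := by
  rw [← restrict_iUnion_strictMono_comp_perm μ]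
  exact integrableOn_finite_iUnion.2 (integrableOn_strictMono_comp_perm μ hF hint)

lemma integral_pi_eq_factorial_smul_setIntegral_strictMono [NormedSpace ℝ E]
    [TopologicalSpace α] [OrderClosedTopology α] [SecondCountableTopology α]
    [OpensMeasurableSpace α]
    (hF : ∀ x (σ : Equiv.Perm (Fin m)), F (x ∘ σ) = F x)
    (hint : IntegrableOn F {x | StrictMono x} (Measure.pi fun _ => μ)) :
    ∫ x, F x ∂Measure.pi (fun _ => μ) =
      m.factorial • ∫ x in {x | StrictMono x}, F x ∂Measure.pi (fun _ => μ) := by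
  have hsector (σ : Equiv.Perm (Fin m)) :
      ∫ x in (fun x => x ∘ σ) ⁻¹' {x | StrictMono x}, F x ∂Measure.pi (fun _ => μ) =
        ∫ x in {x | StrictMono x}, F x ∂Measure.pi (fun _ => μ) := by
    simpa only [hF] using (measurePreserving_pi_comp_perm μ σ).setIntegral_preimage_emb
      (measurableEmbedding_comp_perm σ) F {x | StrictMono x}
  rw [← congrArg (fun ν => ∫ x, F x ∂ν) (restrict_iUnion_strictMono_comp_perm μ),
    integral_iUnion_fintype (fun σ => (measurableEmbedding_comp_perm σ).measurable
      measurableSet_setOf_strictMono) ?_ (integrableOn_strictMono_comp_perm μ hF hint)]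
  · simp only [hsector, Finset.sum_const, Finset.card_univ, Fintype.card_perm, Fintype.card_fin]
  · exact fun σ τ hne => disjoint_left.2 fun x hσ hτ => hne (perm_eq_of_strictMono_comp hσ hτ)

end Exchangeability

section HGamma

variable (γ : ℝ)

lemma hGamma_one : hGamma γ 1 = 0 := by simp [hGamma]

lemma hasDerivAt_hGamma {y : ℝ} (hy : 0 < y) : HasDerivAt (hGamma γ) (y ^ (γ - 1)) y := by
  by_cases hγ : γ = 0
  · have hlog : hGamma γ = Real.log := funext fun _ => if_pos hγ
    rw [hlog, hγ, zero_sub, rpow_neg_one]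
    exact Real.hasDerivAt_log hy.ne'
  · have hpow : hGamma γ = fun y => (y ^ γ - 1) / γ := funext fun _ => if_neg hγ
    have hderiv := ((Real.hasDerivAt_rpow_const (p := γ) (.inl hy.ne')).sub_const 1).div_const γ
    rwa [mul_div_cancel_left₀ _ hγ, ← hpow] at hderiv

lemma strictMonoOn_hGamma : StrictMonoOn (hGamma γ) (Ioi 0) := by
  refine strictMonoOn_of_deriv_pos (convex_Ioi 0)
    (fun y hy => (hasDerivAt_hGamma γ hy).continuousAt.continuousWithinAt) fun y hy => ?_
  rw [interior_Ioi] at hy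
  exact (hasDerivAt_hGamma γ hy).deriv ▸ rpow_pos_of_pos hy _

lemma hGamma_pos {y : ℝ} (hy : 1 < y) : 0 < hGamma γ y :=
  hGamma_one γ ▸ strictMonoOn_hGamma γ (mem_Ioi.2 one_pos) (one_pos.trans hy) hy

lemma hGamma_sub_hGamma {a b : ℝ} (ha : 0 < a) (hb : 0 < b) :
    hGamma γ a - hGamma γ b = b ^ γ * hGamma γ (a / b) := by
  by_cases hγ : γ = 0
  · simp only [hGamma, hγ, if_true, rpow_zero, one_mul, Real.log_div ha.ne' hb.ne']
  · have hbγ := (rpow_pos_of_pos hb γ).ne'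
    simp only [hGamma, hγ, if_false, Real.div_rpow ha.le hb.le]
    field_simp
    ring

lemma hGamma_eq_rpow_mul_hGamma_neg {y : ℝ} (hy : 0 < y) :
    hGamma γ y = y ^ γ * hGamma (-γ) y := by
  by_cases hγ : γ = 0
  · simp only [hGamma, hγ, neg_zero, if_true, rpow_zero, one_mul]
  · have hyγ := (rpow_pos_of_pos hy γ).ne'
    simp only [hGamma, hγ, neg_eq_zero, if_false, rpow_neg hy.le]
    field_simp
    ring

lemma exists_hGamma_eq_rpow_mul {y : ℝ} (hy : 1 < y) :
    ∃ c ∈ Ioo 1 y, hGamma γ y = c ^ (γ - 1) * (y - 1) := by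
  obtain ⟨c, hc, hslope⟩ := exists_hasDerivAt_eq_slope (hGamma γ) (fun y => y ^ (γ - 1)) hy
    (fun z hz => (hasDerivAt_hGamma γ (one_pos.trans_le hz.1)).continuousAt.continuousWithinAt)
    (fun z hz => hasDerivAt_hGamma γ (one_pos.trans hz.1))
  rw [hGamma_one, sub_zero, eq_div_iff (sub_pos.2 hy).ne'] at hslope
  exact ⟨c, hc, hslope.symm⟩

end HGamma

/-- The quantile function of the standard `GP(γ)` distribution as a function of the upper tail
probability `u ∈ (0,1)`: `h_γ(1/u)`. It maps a uniform variable to a `GP(γ)` variable and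
reverses the order. -/
def gpTailQuantile (γ u : ℝ) : ℝ := hGamma γ u⁻¹

section GPTailQuantile

variable (γ : ℝ)

lemma measurable_gpTailQuantile : Measurable (gpTailQuantile γ) :=
  (measurable_hGamma γ).comp measurable_inv

lemma strictAntiOn_gpTailQuantile : StrictAntiOn (gpTailQuantile γ) (Ioi 0) :=
  fun _ hu _ hv huv =>
    strictMonoOn_hGamma γ (mem_Ioi.2 (inv_pos.2 hv)) (mem_Ioi.2 (inv_pos.2 hu))
      (inv_strictAnti₀ hu huv)

lemma gpTailQuantile_pos {u : ℝ} (hu : u ∈ Ioo 0 1) : 0 < gpTailQuantile γ u :=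
  hGamma_pos γ ((one_lt_inv₀ hu.1).2 hu.2)

lemma gpTailQuantile_sub_gpTailQuantile {a b : ℝ} (ha : 0 < a) (hb : 0 < b) :
    gpTailQuantile γ a - gpTailQuantile γ b = b ^ (-γ) * gpTailQuantile γ (a / b) := by
  rw [gpTailQuantile, gpTailQuantile, hGamma_sub_hGamma γ (inv_pos.2 ha) (inv_pos.2 hb),
    Real.inv_rpow hb.le, ← rpow_neg hb.le, gpTailQuantile, inv_div_inv, inv_div]

lemma log_gpTailQuantile_eq {u : ℝ} (hu : u ∈ Ioo 0 1) :
    log (gpTailQuantile γ u) = log (gpTailQuantile (-γ) u) - γ * log u := by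
  have hinv : 0 < u⁻¹ := inv_pos.2 hu.1
  rw [gpTailQuantile, hGamma_eq_rpow_mul_hGamma_neg γ hinv, ← gpTailQuantile,
    log_mul (rpow_pos_of_pos hinv γ).ne' (gpTailQuantile_pos (-γ) hu).ne', log_rpow hinv, log_inv]
  ring

lemma abs_log_gpTailQuantile_le {u : ℝ} (hu : u ∈ Ioo 0 1) :
    |log (gpTailQuantile γ u)| ≤ |log (1 - u)| + (1 + |γ - 1|) * |log u| := by
  obtain ⟨c, hc, hmvt⟩ := exists_hGamma_eq_rpow_mul γ ((one_lt_inv₀ hu.1).2 hu.2)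
  have hcpos : 0 < c := one_pos.trans hc.1
  have hone : 0 < 1 - u := sub_pos.2 hu.2
  have hfactor : u⁻¹ - 1 = (1 - u) / u := by
    rw [sub_div, div_self hu.1.ne', one_div]
  have hlog : log (gpTailQuantile γ u) = (γ - 1) * log c + (log (1 - u) - log u) := by
    rw [gpTailQuantile, hmvt, hfactor,
      log_mul (rpow_pos_of_pos hcpos _).ne' (div_pos hone hu.1).ne', log_rpow hcpos,
      log_div hone.ne' hu.1.ne']
  have hlogc : |log c| ≤ |log u| := by
    rw [abs_of_pos (log_pos hc.1), abs_of_neg (log_neg hu.1 hu.2), ← log_inv]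
    exact log_le_log hcpos hc.2.le
  calc |log (gpTailQuantile γ u)|
      ≤ |γ - 1| * |log c| + (|log (1 - u)| + |log u|) := by
        rw [hlog, ← abs_mul]
        exact (abs_add_le _ _).trans (by gcongr; exact abs_sub _ _)
    _ ≤ |γ - 1| * |log u| + (|log (1 - u)| + |log u|) := by gcongr
    _ = |log (1 - u)| + (1 + |γ - 1|) * |log u| := by ring

end GPTailQuantile

section Uniform

lemma ae_unif01_mem_Ioo : ∀ᵐ u ∂unif01, u ∈ Ioo (0 : ℝ) 1 := ae_restrict_mem measurableSet_Ioo

instance : NullSingletonClass unif01 := inferInstanceAs (NullSingletonClass (volume.restrict _))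

lemma map_inv_unif01 : unif01.map (fun u => u⁻¹) = pareto1 := by
  have hderiv (y : ℝ) (hy : y ∈ Ioi 1) :
      HasDerivWithinAt (fun y : ℝ => y⁻¹) (-(y ^ 2)⁻¹) (Ioi 1) y :=
    (hasDerivAt_inv (one_pos.trans hy).ne').hasDerivWithinAt
  have hdensity : pareto1 = (volume.restrict (Ioi 1)).withDensity
      fun y => ENNReal.ofReal |(ContinuousLinearMap.toSpanSingleton ℝ (-(y ^ 2)⁻¹)).det| := by
    rw [pareto1, paretoMeasure, ← withDensity_indicator measurableSet_Ioi]
    refine withDensity_congr_ae ?_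
    filter_upwards [Measure.ae_ne volume 1] with y hy
    rcases hy.lt_or_gt with hlt | hgt
    · rw [paretoPDF_of_lt hlt, indicator_of_notMem (notMem_Ioi.2 hlt.le)]
    · have hpos : 0 < y := one_pos.trans hgt
      rw [paretoPDF_of_le hgt.le, indicator_of_mem (mem_Ioi.2 hgt)]
      congr 1
      rw [ContinuousLinearMap.det_toSpanSingleton, abs_neg, abs_of_pos (by positivity),
        rpow_neg hpos.le]
      norm_num
  have himage : (fun y : ℝ => y⁻¹) '' Ioi 1 = Ioo 0 1 := by
    rw [image_inv_eq_inv, inv_Ioi₀ one_pos, inv_one]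
  have hmap : pareto1.map (fun y => y⁻¹) = unif01 := by
    rw [hdensity, map_withDensity_abs_det_fderiv_eq_addHaar volume
      measurableSet_Ioi.nullMeasurableSet (fun y hy => (hderiv y hy).hasFDerivWithinAt)
      inv_injective.injOn, himage, unif01]
  rw [← hmap, Measure.map_map measurable_inv measurable_inv]
  simp

lemma map_gpTailQuantile_unif01 (γ : ℝ) : unif01.map (gpTailQuantile γ) = gpMeasure γ := by
  rw [gpMeasure, ← map_inv_unif01, Measure.map_map (measurable_hGamma γ) measurable_inv]
  rfl

lemma integrable_log_unif01 : Integrable log unif01 :=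
  (intervalIntegrable_iff_integrableOn_Ioo_of_le zero_le_one).1
    intervalIntegral.intervalIntegrable_log'

lemma integral_log_unif01 : ∫ u, log u ∂unif01 = -1 := by
  rw [unif01, ← integral_Ioc_eq_integral_Ioo, ← intervalIntegral.integral_of_le zero_le_one,
    integral_log]
  norm_num

lemma measurePreserving_one_sub_unif01 : MeasurePreserving (fun u => 1 - u) unif01 unif01 := by
  have hreflect := (Measure.measurePreserving_sub_left volume (1 : ℝ)).restrict_preimage
    (measurableSet_Ioo (a := (0 : ℝ)) (b := 1))
  simpa [unif01] using hreflect

lemma integrable_log_gpTailQuantile (γ : ℝ) :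
    Integrable (fun u => log (gpTailQuantile γ u)) unif01 := by
  have hlog_one_sub : Integrable (fun u => log (1 - u)) unif01 :=
    measurePreserving_one_sub_unif01.integrable_comp_of_integrable integrable_log_unif01
  have hbound : Integrable (fun u => |log (1 - u)| + (1 + |γ - 1|) * |log u|) unif01 :=
    hlog_one_sub.abs.add (integrable_log_unif01.abs.const_mul _)
  refine hbound.mono'
    (measurable_log.comp (measurable_gpTailQuantile γ)).aestronglyMeasurable ?_
  filter_upwards [ae_unif01_mem_Ioo] with u hu using abs_log_gpTailQuantile_le γ hu

lemma integral_log_gpTailQuantile (γ : ℝ) :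
    ∫ u, log (gpTailQuantile γ u) ∂unif01 = ∫ u, log (gpTailQuantile (-γ) u) ∂unif01 + γ := by
  calc ∫ u, log (gpTailQuantile γ u) ∂unif01
      = ∫ u, log (gpTailQuantile (-γ) u) - γ * log u ∂unif01 :=
        integral_congr_ae <| ae_unif01_mem_Ioo.mono fun u hu => log_gpTailQuantile_eq γ hu
    _ = ∫ u, log (gpTailQuantile (-γ) u) ∂unif01 + γ := by
        rw [integral_sub (integrable_log_gpTailQuantile (-γ)) (integrable_log_unif01.const_mul γ),
          integral_const_mul, integral_log_unif01]
        ring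

end Uniform

section SortedUniform

lemma map_restrict_prod_eq_smul {α β δ : Type*} [MeasurableSpace α] [MeasurableSpace β]
    [MeasurableSpace δ] {ν : Measure α} [SFinite ν] {ρ : Measure β} [SFinite ρ] {ν' : Measure δ}
    [IsFiniteMeasure ν'] {S : Set (α × β)} (hS : MeasurableSet S) {f : α × β → δ}
    (hf : Measurable f) {a : β → ℝ≥0∞}
    (hfiber : ∀ᵐ b ∂ρ, (ν.restrict {x | (x, b) ∈ S}).map (fun x => f (x, b)) = a b • ν') :
    ((ν.prod ρ).restrict S).map f = (∫⁻ b, a b ∂ρ) • ν' := by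
  ext A hA
  have hpre : MeasurableSet (f ⁻¹' A ∩ S) := (hf hA).inter hS
  have hsection : ∀ᵐ b ∂ρ, ν ((fun x => (x, b)) ⁻¹' (f ⁻¹' A ∩ S)) = a b * ν' A := by
    filter_upwards [hfiber] with b hb
    have hfb : Measurable fun x => f (x, b) := hf.comp measurable_prodMk_right
    rw [← smul_eq_mul, ← Measure.smul_apply, ← hb, Measure.map_apply hfb hA,
      Measure.restrict_apply (hfb hA)]
    rfl
  rw [Measure.map_apply hf hA, Measure.restrict_apply (hf hA), Measure.prod_apply_symm hpre,
    lintegral_congr_ae hsection, lintegral_mul_const' _ _ (measure_ne_top ν' A),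
    Measure.smul_apply, smul_eq_mul]

lemma map_div_unif01_restrict_Iio {c : ℝ} (hc : c ∈ Ioo 0 1) :
    (unif01.restrict (Iio c)).map (fun x => x / c) = ENNReal.ofReal c • unif01 := by
  have hdiv : Measurable fun x : ℝ => x / c := measurable_id.div_const c
  have hpre : Iio c ∩ Ioo 0 1 = (fun x => x / c) ⁻¹' Ioo 0 1 := by
    ext x
    simp only [mem_inter_iff, mem_Iio, mem_Ioo, mem_preimage, div_pos_iff_of_pos_right hc.1,
      div_lt_one hc.1]
    exact ⟨fun h => ⟨h.2.1, h.1⟩, fun h => ⟨h.2, h.1, h.2.trans hc.2⟩⟩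
  have hscale : volume.map (fun x => x / c) = ENNReal.ofReal c • (volume : Measure ℝ) := by
    simpa only [div_eq_mul_inv, inv_inv, abs_of_pos hc.1] using
      Real.map_volume_mul_right (inv_ne_zero hc.1.ne')
  rw [unif01, Measure.restrict_restrict measurableSet_Iio, hpre,
    ← Measure.restrict_map hdiv measurableSet_Ioo, hscale,
    Measure.restrict_smul]

lemma map_div_unif01_prod_restrict {c : ℝ} (hc : c ∈ Ioo 0 1) :
    ((unif01.prod unif01).restrict {p | p.1 < p.2 ∧ p.2 < c}).map (Prod.map (· / c) (· / c)) =
      ENNReal.ofReal c ^ 2 • (unif01.prod unif01).restrict {p | p.1 < p.2} := by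
  have hdiv : Measurable fun x : ℝ => x / c := measurable_id.div_const c
  have hlt : MeasurableSet {p : ℝ × ℝ | p.1 < p.2} := measurableSet_lt measurable_fst measurable_snd
  have hset : {p : ℝ × ℝ | p.1 < p.2 ∧ p.2 < c} =
      Prod.map (· / c) (· / c) ⁻¹' {p : ℝ × ℝ | p.1 < p.2} ∩ Iio c ×ˢ Iio c := by
    ext p
    simp only [mem_ofPred_eq, mem_inter_iff, mem_preimage, Prod.map_fst, Prod.map_snd, mem_prod,
      mem_Iio, div_lt_div_iff_of_pos_right hc.1]
    exact ⟨fun h => ⟨h.1, h.1.trans h.2, h.2⟩, fun h => ⟨h.1, h.2.2⟩⟩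
  rw [hset, ← Measure.restrict_restrict (hdiv.prodMap hdiv hlt), ← Measure.prod_restrict,
    ← Measure.restrict_map (hdiv.prodMap hdiv) hlt, ← Measure.map_prod_map _ _ hdiv hdiv,
    map_div_unif01_restrict_Iio hc, Measure.prod_smul_left, Measure.prod_smul_right,
    Measure.restrict_smul, Measure.restrict_smul, smul_smul, sq]

lemma map_div_unif01_prod_restrict_lt :
    ((unif01.prod unif01).restrict {p | p.1 < p.2}).map (fun p => p.1 / p.2) =
      (1 / 2 : ℝ≥0∞) • unif01 := by
  have hmean : ∫⁻ c, ENNReal.ofReal c ∂unif01 = 1 / 2 := by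
    rw [← ofReal_integral_eq_lintegral_ofReal, unif01, ← integral_Ioc_eq_integral_Ioo,
      ← intervalIntegral.integral_of_le zero_le_one, integral_id]
    · norm_num [ENNReal.ofReal_div_of_pos]
    · exact Integrable.of_bound aestronglyMeasurable_id 1 <| ae_unif01_mem_Ioo.mono fun c hc =>
        (abs_of_pos hc.1).trans_le hc.2.le
    · filter_upwards [ae_unif01_mem_Ioo] with c hc using hc.1.le
  rw [← hmean]
  refine map_restrict_prod_eq_smul (measurableSet_lt measurable_fst measurable_snd)
    (measurable_fst.div measurable_snd) ?_
  filter_upwards [ae_unif01_mem_Ioo] with c hc using map_div_unif01_restrict_Iio hc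

lemma measurableSet_setOf_lt_lt_mem {β : Type*} [MeasurableSpace β] {c : β → ℝ}
    (hc : Measurable c) {B : Set β} (hB : MeasurableSet B) :
    MeasurableSet {q : (ℝ × ℝ) × β | q.1.1 < q.1.2 ∧ q.1.2 < c q.2 ∧ q.2 ∈ B} := by
  have hlt₁ : MeasurableSet {q : (ℝ × ℝ) × β | q.1.1 < q.1.2} :=
    measurableSet_lt (by fun_prop) (by fun_prop)
  have hlt₂ : MeasurableSet {q : (ℝ × ℝ) × β | q.1.2 < c q.2} :=
    measurableSet_lt (by fun_prop) (by fun_prop)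
  exact hlt₁.inter (hlt₂.inter (measurable_snd hB))

lemma map_div_unif01_prod_prod_restrict {β : Type*} [MeasurableSpace β] {ρ : Measure β}
    [SFinite ρ] {c : β → ℝ} (hc : Measurable c) (hc01 : ∀ᵐ b ∂ρ, c b ∈ Ioo 0 1) {B : Set β}
    (hB : MeasurableSet B) :
    (((unif01.prod unif01).prod ρ).restrict {q | q.1.1 < q.1.2 ∧ q.1.2 < c q.2 ∧ q.2 ∈ B}).map
        (fun q => q.1.map (· / c q.2) (· / c q.2)) =
      (∫⁻ b in B, ENNReal.ofReal (c b) ^ 2 ∂ρ) • (unif01.prod unif01).restrict {p | p.1 < p.2} := by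
  rw [← lintegral_indicator hB]
  refine map_restrict_prod_eq_smul (measurableSet_setOf_lt_lt_mem hc hB)
    (by unfold Prod.map; fun_prop) ?_
  filter_upwards [hc01] with b hb
  by_cases hbB : b ∈ B
  · simp only [hbB, and_true, indicator_of_mem]
    exact map_div_unif01_prod_restrict hb
  · simp [hbB]

/-- Splits a vector into the pair of its first two entries and the remaining ones. -/
def splitFirstTwo {k : ℕ} (u : Fin (k + 3) → ℝ) : (ℝ × ℝ) × (Fin (k + 1) → ℝ) :=
  ((u 0, u 1), fun i => u i.succ.succ)

lemma measurePreserving_splitFirstTwo {k : ℕ} (μ : Measure ℝ) [SigmaFinite μ] :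
    MeasurePreserving (splitFirstTwo (k := k)) (Measure.pi fun _ => μ)
      ((μ.prod μ).prod (Measure.pi fun _ => μ)) := by
  have h1 := measurePreserving_piFinSuccAbove (fun _ : Fin (k + 3) => μ) 0
  have h2 := measurePreserving_piFinSuccAbove (fun _ : Fin (k + 2) => μ) 0
  exact (measurePreserving_prodAssoc μ μ _).symm.comp (((MeasurePreserving.id μ).prod h2).comp h1)

lemma strictMono_iff_splitFirstTwo {k : ℕ} {u : Fin (k + 3) → ℝ} :
    StrictMono u ↔ (splitFirstTwo u).1.1 < (splitFirstTwo u).1.2 ∧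
      (splitFirstTwo u).1.2 < (splitFirstTwo u).2 0 ∧ StrictMono (splitFirstTwo u).2 := by
  have hu : u = Matrix.vecCons (u 0) (Matrix.vecCons (u 1) fun i => u i.succ.succ) := by
    ext i
    refine Fin.cases rfl (fun i => Fin.cases rfl (fun i => rfl) i) i
  conv_lhs => rw [hu, strictMono_vecCons, strictMono_vecCons]
  rfl

lemma exists_map_div_pi_unif01_restrict_strictMono (k : ℕ) :
    ∃ C : ℝ≥0∞, C ≠ ∞ ∧
      ((Measure.pi fun _ : Fin (k + 3) => unif01).restrict {u | StrictMono u}).map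
        (fun u => (u 0 / u 2, u 1 / u 2)) =
      C • (unif01.prod unif01).restrict {p | p.1 < p.2} := by
  have hmem : ∀ᵐ v ∂Measure.pi fun _ : Fin (k + 1) => unif01, v 0 ∈ Ioo (0 : ℝ) 1 :=
    (measurePreserving_eval (fun _ => unif01) 0).quasiMeasurePreserving.ae ae_unif01_mem_Ioo
  let C : ℝ≥0∞ := ∫⁻ v in {v : Fin (k + 1) → ℝ | StrictMono v},
    ENNReal.ofReal (v 0) ^ 2 ∂Measure.pi fun _ => unif01
  have hC : C ≤ 1 := by
    calc C ≤ ∫⁻ v : Fin (k + 1) → ℝ, ENNReal.ofReal (v 0) ^ 2 ∂Measure.pi fun _ => unif01 :=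
          setLIntegral_le_lintegral _ _
      _ ≤ ∫⁻ _ : Fin (k + 1) → ℝ, 1 ∂Measure.pi fun _ => unif01 :=
          lintegral_mono_ae <| hmem.mono fun v hv =>
            pow_le_one₀ zero_le (ENNReal.ofReal_le_one.2 hv.2.le)
      _ = 1 := by rw [lintegral_one, measure_univ]
  refine ⟨C, ne_top_of_le_ne_top ENNReal.one_ne_top hC, ?_⟩
  have hsplit := measurePreserving_splitFirstTwo (k := k) unif01
  have hsorted := hsplit.restrict_preimage <|
    measurableSet_setOf_lt_lt_mem (measurable_pi_apply 0) measurableSet_setOf_strictMono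
  rw [← map_div_unif01_prod_prod_restrict (measurable_pi_apply 0) hmem
    measurableSet_setOf_strictMono, ← hsorted.map_eq,
    Measure.map_map (by unfold Prod.map; fun_prop) hsorted.measurable]
  simp only [preimage, mem_ofPred_eq, ← strictMono_iff_splitFirstTwo]
  rfl

end SortedUniform

section RatioKernel

lemma setIntegral_fst_lt_snd_of_symm {α E : Type*} [LinearOrder α] [TopologicalSpace α]
    [OrderClosedTopology α] [SecondCountableTopology α] [MeasurableSpace α]
    [OpensMeasurableSpace α] [MeasurableEq α] [NormedAddCommGroup E] [NormedSpace ℝ E]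
    {μ : Measure α} [SFinite μ] [NullSingletonClass μ] {f : α × α → E}
    (hf : Integrable f (μ.prod μ)) (hsymm : ∀ p, f p.swap = f p) :
    ∫ p in {p | p.1 < p.2}, f p ∂μ.prod μ = (1 / 2 : ℝ) • ∫ p, f p ∂μ.prod μ := by
  have hmeas : MeasurableSet {p : α × α | p.1 < p.2} :=
    measurableSet_lt measurable_fst measurable_snd
  have hcompl : {p : α × α | p.1 < p.2}ᶜ =ᵐ[μ.prod μ] Prod.swap ⁻¹' {p | p.1 < p.2} := by
    filter_upwards [ae_prod_fst_ne_snd μ μ] with p hp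
    exact propext (not_lt.trans hp.symm.le_iff_lt)
  have hswap : ∫ p in {p | p.1 < p.2}ᶜ, f p ∂μ.prod μ = ∫ p in {p | p.1 < p.2}, f p ∂μ.prod μ := by
    refine (setIntegral_congr_set hcompl).trans ?_
    simpa only [hsymm] using Measure.measurePreserving_swap.setIntegral_preimage_emb
      MeasurableEquiv.prodComm.measurableEmbedding f {p : α × α | p.1 < p.2}
  rw [← integral_add_compl hmeas hf, hswap, ← two_smul ℝ, smul_smul]
  norm_num

lemma integrableOn_comp_div_unif01 {φ : ℝ → ℝ} (hφ : Integrable φ unif01) :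
    IntegrableOn (fun p => φ (p.1 / p.2)) {p | p.1 < p.2} (unif01.prod unif01) := by
  have hmap := hφ.smul_measure (c := 1 / 2) (by norm_num)
  rw [← map_div_unif01_prod_restrict_lt] at hmap
  exact hmap.comp_measurable (measurable_fst.div measurable_snd)

lemma setIntegral_comp_div_unif01 {φ : ℝ → ℝ} (hφ : Integrable φ unif01) :
    ∫ p in {p | p.1 < p.2}, φ (p.1 / p.2) ∂unif01.prod unif01 = 1 / 2 * ∫ u, φ u ∂unif01 := by
  have hmap := hφ.smul_measure (c := 1 / 2) (by norm_num)
  rw [← map_div_unif01_prod_restrict_lt] at hmap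
  calc ∫ p in {p | p.1 < p.2}, φ (p.1 / p.2) ∂unif01.prod unif01
      = ∫ u, φ u ∂((unif01.prod unif01).restrict {p | p.1 < p.2}).map (fun p => p.1 / p.2) :=
        (integral_map (by fun_prop) hmap.aestronglyMeasurable).symm
    _ = 1 / 2 * ∫ u, φ u ∂unif01 := by
        rw [map_div_unif01_prod_restrict_lt, integral_smul_measure]
        norm_num

lemma integrable_add_unif01 {φ : ℝ → ℝ} (hφ : Integrable φ unif01) :
    Integrable (fun p => φ p.1 + φ p.2) (unif01.prod unif01) :=
  (hφ.comp_fst unif01).add (hφ.comp_snd unif01)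

lemma setIntegral_add_unif01 {φ : ℝ → ℝ} (hφ : Integrable φ unif01) :
    ∫ p in {p | p.1 < p.2}, (φ p.1 + φ p.2) ∂unif01.prod unif01 = ∫ u, φ u ∂unif01 := by
  rw [setIntegral_fst_lt_snd_of_symm (integrable_add_unif01 hφ) fun p => add_comm _ _,
    integral_add (hφ.comp_fst unif01) (hφ.comp_snd unif01), integral_fun_fst, integral_fun_snd]
  simp only [probReal_univ, smul_eq_mul]
  ring

lemma measureReal_fst_lt_snd_unif01 :
    (unif01.prod unif01).real {p | p.1 < p.2} = 1 / 2 := by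
  simpa using setIntegral_fst_lt_snd_of_symm (μ := unif01) (f := fun _ => (1 : ℝ))
    (integrable_const 1) fun _ => rfl

/-- The Pickands kernel of a decreasing `GP(γ)` triple with upper tail probabilities `a < b < c`,
expressed through the pair of ratios `p = (a / c, b / c)`. -/
def pickandsRatioKernel (γ : ℝ) (p : ℝ × ℝ) : ℝ :=
  log (gpTailQuantile γ (p.1 / p.2)) + log (gpTailQuantile (-γ) (p.1 / p.2)) -
    (log (gpTailQuantile (-γ) p.1) + log (gpTailQuantile (-γ) p.2))

lemma KP_eq_log_sub_log {x y z : ℝ} (hxy : y < x) (hyz : z < y) :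
    KP ![x, y, z] = 2 * log (x - y) - (log (x - z) + log (y - z)) := by
  have hxy' := (sub_pos.2 hxy).ne'
  have hxz' := (sub_pos.2 (hyz.trans hxy)).ne'
  have hyz' := (sub_pos.2 hyz).ne'
  calc KP ![x, y, z] = log ((x - y) ^ 2 / ((x - z) * (y - z))) := rfl
    _ = 2 * log (x - y) - (log (x - z) + log (y - z)) := by
        rw [log_div (pow_ne_zero _ hxy') (mul_ne_zero hxz' hyz'), log_pow, log_mul hxz' hyz',
          Nat.cast_two]

lemma KP_gpTailQuantile (γ : ℝ) {a b c : ℝ} (ha : 0 < a) (hab : a < b) (hbc : b < c) :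
    KP ![gpTailQuantile γ a, gpTailQuantile γ b, gpTailQuantile γ c] =
      pickandsRatioKernel γ (a / c, b / c) := by
  have hb := ha.trans hab
  have hc := hb.trans hbc
  have hmem {s t : ℝ} (hs : 0 < s) (hst : s < t) : s / t ∈ Ioo 0 1 :=
    ⟨div_pos hs (hs.trans hst), (div_lt_one (hs.trans hst)).2 hst⟩
  have hlog {s t : ℝ} (hs : 0 < s) (hst : s < t) :
      log (gpTailQuantile γ s - gpTailQuantile γ t) =
        log (gpTailQuantile (-γ) (s / t)) - γ * log s := by
    have ht := hs.trans hst
    rw [gpTailQuantile_sub_gpTailQuantile γ hs ht, log_mul (rpow_pos_of_pos ht _).ne'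
      (gpTailQuantile_pos γ (hmem hs hst)).ne', log_rpow ht, log_gpTailQuantile_eq γ (hmem hs hst),
      log_div hs.ne' ht.ne']
    ring
  have hlt {s t : ℝ} (hs : 0 < s) (hst : s < t) : gpTailQuantile γ t < gpTailQuantile γ s :=
    strictAntiOn_gpTailQuantile γ hs (hs.trans hst) hst
  rw [KP_eq_log_sub_log (hlt ha hab) (hlt hb hbc), hlog ha hab, hlog ha (hab.trans hbc),
    hlog hb hbc, pickandsRatioKernel, div_div_div_cancel_right₀ hc.ne',
    log_gpTailQuantile_eq γ (hmem ha hab), log_div ha.ne' hb.ne']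
  ring

lemma integrableOn_pickandsRatioKernel (γ : ℝ) :
    IntegrableOn (pickandsRatioKernel γ) {p | p.1 < p.2} (unif01.prod unif01) :=
  ((integrableOn_comp_div_unif01 (integrable_log_gpTailQuantile γ)).add
    (integrableOn_comp_div_unif01 (integrable_log_gpTailQuantile (-γ)))).sub
      (integrable_add_unif01 (integrable_log_gpTailQuantile (-γ))).integrableOn

lemma setIntegral_pickandsRatioKernel (γ : ℝ) :
    ∫ p in {p | p.1 < p.2}, pickandsRatioKernel γ p ∂unif01.prod unif01 = γ / 2 := by
  have hγ := integrable_log_gpTailQuantile γ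
  have hneg := integrable_log_gpTailQuantile (-γ)
  have hγdiv := integrableOn_comp_div_unif01 hγ
  have hnegdiv := integrableOn_comp_div_unif01 hneg
  have hsum : IntegrableOn
      (fun p => log (gpTailQuantile γ (p.1 / p.2)) + log (gpTailQuantile (-γ) (p.1 / p.2)))
      {p | p.1 < p.2} (unif01.prod unif01) := hγdiv.add hnegdiv
  simp only [pickandsRatioKernel]
  rw [integral_sub hsum (integrable_add_unif01 hneg).integrableOn, integral_add hγdiv hnegdiv,
    setIntegral_comp_div_unif01 hγ, setIntegral_comp_div_unif01 hneg, setIntegral_add_unif01 hneg,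
    integral_log_gpTailQuantile γ]
  ring

lemma setIntegral_pickandsRatioKernel_sub (γ : ℝ) :
    ∫ p in {p | p.1 < p.2}, (pickandsRatioKernel γ p - γ) ∂unif01.prod unif01 = 0 := by
  rw [integral_sub (integrableOn_pickandsRatioKernel γ) (integrable_const γ),
    setIntegral_pickandsRatioKernel, setIntegral_const, measureReal_fst_lt_snd_unif01, smul_eq_mul]
  ring

end RatioKernel

section GPSample

lemma integrableOn_comp_div_pi_unif01 {k : ℕ} {g : ℝ × ℝ → ℝ}
    (hg : IntegrableOn g {p | p.1 < p.2} (unif01.prod unif01)) :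
    IntegrableOn (fun u : Fin (k + 3) → ℝ => g (u 0 / u 2, u 1 / u 2)) {u | StrictMono u}
      (Measure.pi fun _ => unif01) := by
  obtain ⟨C, hC, hmap⟩ := exists_map_div_pi_unif01_restrict_strictMono k
  have hgmap := Integrable.smul_measure hg hC
  rw [← hmap] at hgmap
  exact hgmap.comp_measurable (by fun_prop)

lemma setIntegral_comp_div_pi_unif01_eq_zero {k : ℕ} {g : ℝ × ℝ → ℝ}
    (hg : IntegrableOn g {p | p.1 < p.2} (unif01.prod unif01))
    (hzero : ∫ p in {p | p.1 < p.2}, g p ∂unif01.prod unif01 = 0) :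
    ∫ u in {u : Fin (k + 3) → ℝ | StrictMono u}, g (u 0 / u 2, u 1 / u 2)
      ∂Measure.pi (fun _ => unif01) = 0 := by
  obtain ⟨C, hC, hmap⟩ := exists_map_div_pi_unif01_restrict_strictMono k
  have hgmap := Integrable.smul_measure hg hC
  rw [← hmap] at hgmap
  have hpush := integral_map (φ := fun u : Fin (k + 3) → ℝ => (u 0 / u 2, u 1 / u 2))
    (by fun_prop) hgmap.aestronglyMeasurable
  rw [← hpush, hmap, integral_smul_measure, hzero, smul_zero]

lemma Km_KP_gpTailQuantile_of_strictMono (γ : ℝ) {k : ℕ} {u : Fin (k + 3) → ℝ}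
    (hpos : ∀ i, 0 < u i) (hu : StrictMono u) :
    Km KP (k + 3) (gpTailQuantile γ ∘ u) = pickandsRatioKernel γ (u 0 / u 2, u 1 / u 2) := by
  have hanti : Antitone (gpTailQuantile γ ∘ u) := fun i j hij =>
    (strictAntiOn_gpTailQuantile γ).antitoneOn (hpos i) (hpos j) (hu.monotone hij)
  calc Km KP (k + 3) (gpTailQuantile γ ∘ u)
      = KP ![gpTailQuantile γ (u 0), gpTailQuantile γ (u 1), gpTailQuantile γ (u 2)] := by
        rw [Km_of_antitone KP (Nat.le_add_left 3 k) hanti]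
        rfl
    _ = pickandsRatioKernel γ (u 0 / u 2, u 1 / u 2) :=
        KP_gpTailQuantile γ (hpos 0) (hu (by simp)) (hu (by simp [Fin.lt_def, Nat.mod_eq_of_lt]))

lemma Km_KP_gpTailQuantile_ae_eq (γ : ℝ) (k : ℕ) :
    (fun u : Fin (k + 3) → ℝ => Km KP (k + 3) (gpTailQuantile γ ∘ u))
      =ᵐ[(Measure.pi fun _ => unif01).restrict {u | StrictMono u}]
        fun u => pickandsRatioKernel γ (u 0 / u 2, u 1 / u 2) := by
  have hpos : ∀ᵐ u ∂Measure.pi fun _ : Fin (k + 3) => unif01, ∀ i, 0 < u i :=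
    ae_all_iff.2 fun i => (measurePreserving_eval (fun _ => unif01) i).quasiMeasurePreserving.ae
      (ae_unif01_mem_Ioo.mono fun _ hu => hu.1)
  filter_upwards [ae_restrict_of_ae hpos, ae_restrict_mem measurableSet_setOf_strictMono]
    with u hpos hu using Km_KP_gpTailQuantile_of_strictMono γ hpos hu

lemma Km_gpTailQuantile_comp_perm {q m : ℕ} (K : (Fin q → ℝ) → ℝ) (γ : ℝ) (u : Fin m → ℝ)
    (σ : Equiv.Perm (Fin m)) :
    Km K m (gpTailQuantile γ ∘ (u ∘ σ)) = Km K m (gpTailQuantile γ ∘ u) := by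
  rw [← Function.comp_assoc, Km_comp_perm]

lemma integrableOn_Km_KP_gpTailQuantile (γ : ℝ) (k : ℕ) :
    IntegrableOn (fun u : Fin (k + 3) → ℝ => Km KP (k + 3) (gpTailQuantile γ ∘ u))
      {u | StrictMono u} (Measure.pi fun _ => unif01) :=
  (integrableOn_comp_div_pi_unif01 (integrableOn_pickandsRatioKernel γ)).congr
    (Km_KP_gpTailQuantile_ae_eq γ k).symm

lemma integrable_Km_KP_gpTailQuantile (γ : ℝ) (k : ℕ) :
    Integrable (fun u : Fin (k + 3) → ℝ => Km KP (k + 3) (gpTailQuantile γ ∘ u))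
      (Measure.pi fun _ => unif01) :=
  integrable_pi_of_integrableOn_strictMono unif01 (Km_gpTailQuantile_comp_perm KP γ)
    (integrableOn_Km_KP_gpTailQuantile γ k)

lemma integral_Km_KP_gpTailQuantile (γ : ℝ) (k : ℕ) :
    ∫ u : Fin (k + 3) → ℝ, Km KP (k + 3) (gpTailQuantile γ ∘ u) ∂Measure.pi (fun _ => unif01) =
      γ := by
  -- For a centered kernel the mass of the law of the ratios is irrelevant.
  have hsorted : ∫ u in {u : Fin (k + 3) → ℝ | StrictMono u},
      (Km KP (k + 3) (gpTailQuantile γ ∘ u) - γ) ∂Measure.pi (fun _ => unif01) = 0 := by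
    rw [← setIntegral_comp_div_pi_unif01_eq_zero (k := k)
      ((integrableOn_pickandsRatioKernel γ).sub (integrable_const γ))
      (setIntegral_pickandsRatioKernel_sub γ)]
    exact integral_congr_ae ((Km_KP_gpTailQuantile_ae_eq γ k).sub .rfl)
  have hcentered : ∫ u : Fin (k + 3) → ℝ, (Km KP (k + 3) (gpTailQuantile γ ∘ u) - γ)
      ∂Measure.pi (fun _ => unif01) = 0 := by
    rw [integral_pi_eq_factorial_smul_setIntegral_strictMono unif01
      (F := fun u => Km KP (k + 3) (gpTailQuantile γ ∘ u) - γ)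
      (fun u σ => by rw [Km_gpTailQuantile_comp_perm])
      ((integrableOn_Km_KP_gpTailQuantile γ k).sub (integrable_const γ)), hsorted, smul_zero]
  rwa [integral_sub (integrable_Km_KP_gpTailQuantile γ k) (integrable_const γ), integral_const,
    probReal_univ, one_smul, sub_eq_zero] at hcentered

lemma measurePreserving_gpTailQuantile_comp (γ : ℝ) (m : ℕ) :
    MeasurePreserving (fun u : Fin m → ℝ => gpTailQuantile γ ∘ u) (Measure.pi fun _ => unif01)
      (gpPi γ m) :=
  measurePreserving_pi (fun _ => unif01) (fun _ => gpMeasure γ) fun _ =>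
    ⟨measurable_gpTailQuantile γ, map_gpTailQuantile_unif01 γ⟩

lemma measurable_KP : Measurable KP := by
  unfold KP
  fun_prop

lemma integral_comp_of_measurePreserving {α β E : Type*} [MeasurableSpace α] [MeasurableSpace β]
    [NormedAddCommGroup E] [NormedSpace ℝ E] {μ : Measure α} {ν : Measure β} {f : α → β}
    (hf : MeasurePreserving f μ ν) {g : β → E} (hg : AEStronglyMeasurable g ν) :
    ∫ x, g (f x) ∂μ = ∫ y, g y ∂ν := by
  rw [← hf.map_eq] at hg ⊢
  exact (integral_map hf.aemeasurable hg).symm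

lemma integrable_Km_KP (γ : ℝ) {m : ℕ} (hm : 3 ≤ m) : Integrable (Km KP m) (gpPi γ m) := by
  obtain ⟨k, rfl⟩ := Nat.exists_eq_add_of_le' hm
  exact ((measurePreserving_gpTailQuantile_comp γ (k + 3)).integrable_comp
    (measurable_Km measurable_KP).aestronglyMeasurable).1 (integrable_Km_KP_gpTailQuantile γ k)

lemma integral_Km_KP (γ : ℝ) {m : ℕ} (hm : 3 ≤ m) : ∫ x, Km KP m x ∂gpPi γ m = γ := by
  obtain ⟨k, rfl⟩ := Nat.exists_eq_add_of_le' hm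
  rw [← integral_comp_of_measurePreserving (measurePreserving_gpTailQuantile_comp γ (k + 3))
    (measurable_Km measurable_KP).aestronglyMeasurable, integral_Km_KP_gpTailQuantile]

end GPSample

section UStatistic

variable {Ω α : Type*} [MeasurableSpace Ω] [MeasurableSpace α] {P : Measure Ω}
  [IsProbabilityMeasure P]

lemma measurePreserving_pi_of_iIndepFun {ι κ : Type*} [Fintype κ] {μ : Measure α}
    {X : ι → Ω → α} (hX : ∀ i, Measurable (X i)) (hindep : iIndepFun X P)
    (hlaw : ∀ i, P.map (X i) = μ) {e : κ → ι} (he : Function.Injective e) :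
    MeasurePreserving (fun ω j => X (e j) ω) P (Measure.pi fun _ => μ) where
  measurable := measurable_pi_lambda _ fun j => hX (e j)
  map_eq := by
    rw [(iIndepFun_iff_map_fun_eq_pi_map fun j => (hX (e j)).aemeasurable).1 (hindep.precomp he)]
    simp only [hlaw]

lemma integral_UStat {q m n : ℕ} {K : (Fin q → ℝ) → ℝ} (hmn : m ≤ n) {μ : Measure ℝ}
    (hK : Integrable (Km K m) (Measure.pi fun _ => μ)) {Z : Fin n → Ω → ℝ}
    (hZ : ∀ i, Measurable (Z i)) (hindep : iIndepFun Z P) (hlaw : ∀ i, P.map (Z i) = μ) :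
    ∫ ω, UStat K m n (fun i => Z i ω) ∂P = ∫ x, Km K m x ∂Measure.pi (fun _ => μ) := by
  have hterm (I : Finset (Fin n)) (hI : I ∈ Finset.powersetCard m Finset.univ) :
      Integrable (fun ω => Km K I.card fun j => Z (I.orderIsoOfFin rfl j).1 ω) P ∧
        ∫ ω, Km K I.card (fun j => Z (I.orderIsoOfFin rfl j).1 ω) ∂P =
          ∫ x, Km K m x ∂Measure.pi (fun _ => μ) := by
    obtain rfl := (Finset.mem_powersetCard.1 hI).2
    have hblock := measurePreserving_pi_of_iIndepFun hZ hindep hlaw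
      (Subtype.val_injective.comp (I.orderIsoOfFin rfl).injective)
    exact ⟨hblock.integrable_comp_of_integrable hK,
      integral_comp_of_measurePreserving hblock hK.aestronglyMeasurable⟩
  have hchoose : (n.choose m : ℝ) ≠ 0 := Nat.cast_ne_zero.2 (Nat.choose_pos hmn).ne'
  simp only [UStat]
  rw [integral_const_mul, integral_finsetSum _ fun I hI => (hterm I hI).1,
    Finset.sum_congr rfl fun I hI => (hterm I hI).2, Finset.sum_const, Finset.card_powersetCard,
    Finset.card_univ, Fintype.card_fin, nsmul_eq_mul, inv_mul_cancel_left₀ hchoose]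

end UStatistic

/-- Proposition: unbiasedness of the extreme U-Pickands estimator for
GP samples. For iid standard `GP(γ)` variables `Z_1,…,Z_n` and `n ≥ m ≥ 3`,
`E[K_{P,m}(Z_1,…,Z_m)] = γ`, and the corresponding U-statistic is an unbiased
estimator of `γ`. -/
theorem pickands_kernel_unbiased
    {Ω : Type*} [MeasurableSpace Ω] (P : Measure Ω) [IsProbabilityMeasure P]
    (γ : ℝ) (n m : ℕ) (hm : 3 ≤ m) (hmn : m ≤ n)
    (Z : Fin n → Ω → ℝ) (hZmeas : ∀ i, Measurable (Z i))
    (hIndep : iIndepFun Z P)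
    (hDist : ∀ i, Measure.map (Z i) P = gpMeasure γ) :
    (∫ ω, Km KP m (fun i : Fin m => Z (Fin.castLE hmn i) ω) ∂P) = γ ∧
    (∫ ω, UStat KP m n (fun i : Fin n => Z i ω) ∂P) = γ := by
  have hfirst := measurePreserving_pi_of_iIndepFun hZmeas hIndep hDist
    (Fin.castLE_injective hmn)
  have hint := integrable_Km_KP γ hm
  constructor
  · calc ∫ ω, Km KP m (fun i : Fin m => Z (Fin.castLE hmn i) ω) ∂P
        = ∫ x, Km KP m x ∂gpPi γ m :=
          integral_comp_of_measurePreserving hfirst hint.aestronglyMeasurable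
      _ = γ := integral_Km_KP γ hm
  · calc ∫ ω, UStat KP m n (fun i : Fin n => Z i ω) ∂P
        = ∫ x, Km KP m x ∂gpPi γ m := integral_UStat hmn hint hZmeas hIndep hDist
      _ = γ := integral_Km_KP γ hm

end
end

section
/- Let n ≥ m ≥ 3 be integers and let X_1,…,X_n be real numbers with pairwise distinct values, with descending order statistics X_{n:n} > X_{n−1:n} > … > X_{1:n}. Define K_P(y_1,y_2,y_3) = 2 ln((y_1−y_2)/(y_2−y_3)) − ln((y_1−y_3)/(y_2−y_3)) and K_{P,m}(x_I) = K_P applied to the three largest values of x_I. Then the U-statistic U^m_{n,P} = C(n,m)^{−1} Σ_{I ⊂ [n], |I|=m} K_{P,m}(X_I) equals Σ_{j=2}^{n−m+3} [C(n−j, m−3)/C(n,m)] · (2(n−j+1)/(m−2) − j) · Σ_{i=1}^{j−1} ln(X_{n−i+1:n} − X_{n−j+1:n}). -/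
open MeasureTheory ProbabilityTheory Filter Real Set Topology
open scoped ENNReal NNReal Classical

noncomputable section

/-- The Pickands kernel in its two-term form
`K_P(y₁,y₂,y₃) = 2 ln((y₁-y₂)/(y₂-y₃)) - ln((y₁-y₃)/(y₂-y₃))`. -/
def KP2 : (Fin 3 → ℝ) → ℝ :=
  fun y => 2 * Real.log ((y 0 - y 1) / (y 1 - y 2)) - Real.log ((y 0 - y 2) / (y 1 - y 2))

/-!
An `m`-subset of the sample is determined by the set of descending ranks of its members, and
`K_{P,m}` sees only the three smallest of these ranks, say `a < b < c` counted from `0`. The other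
`m - 3` ranks are chosen freely beyond `c`, so the subset sum is a sum over triples with weight
`C(n-1-c, m-3)`. Writing `L a b` for the logarithm of the gap between the observations of ranks
`a` and `b`, the kernel equals `2 L a b - L a c - L b c`. In the first term the weights are summed
over `c` by the hockey-stick identity; in the other two each pair with larger rank `c` occurs
`c - 1` times. Collecting the coefficient of each gap gives the formula.
-/

section SubsetSums

lemma sum_powersetCard_succ {α M : Type*} [LinearOrder α] [AddCommMonoid M]
    (s : Finset α) (k : ℕ) (F : Finset α → M) :
    ∑ S ∈ s.powersetCard (k + 1), F S =
      ∑ a ∈ s, ∑ T ∈ (s.filter (a < ·)).powersetCard k, F (insert a T) := by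
  induction s using Finset.induction_on_min with
  | empty => rw [Finset.powersetCard_eq_empty.2 (by simp), Finset.sum_empty, Finset.sum_empty]
  | insert a s ha ih =>
    have ha_notMem : a ∉ s := fun h => lt_irrefl _ (ha a h)
    have notMem_of_mem {T : Finset α} {j : ℕ} (hT : T ∈ s.powersetCard j) : a ∉ T :=
      fun h => ha_notMem ((Finset.mem_powersetCard.1 hT).1 h)
    have filter_min : (insert a s).filter (a < ·) = s := by
      rw [Finset.filter_insert, if_neg (lt_irrefl a), Finset.filter_true_of_mem ha]
    have filter_of_mem {b : α} (hb : b ∈ s) :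
        (insert a s).filter (b < ·) = s.filter (b < ·) := by
      rw [Finset.filter_insert, if_neg (ha b hb).not_gt]
    have disjoint : Disjoint (s.powersetCard (k + 1)) ((s.powersetCard k).image (insert a)) := by
      refine Finset.disjoint_left.2 fun S hS hS' => ?_
      obtain ⟨T, -, rfl⟩ := Finset.mem_image.1 hS'
      exact notMem_of_mem hS (Finset.mem_insert_self a T)
    have injOn : Set.InjOn (insert a) (s.powersetCard k : Set (Finset α)) := by
      intro S hS T hT hST
      rw [← Finset.erase_insert (notMem_of_mem hS), hST, Finset.erase_insert (notMem_of_mem hT)]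
    rw [Finset.powersetCard_succ_insert ha_notMem, Finset.sum_union disjoint,
      Finset.sum_image injOn, Finset.sum_insert ha_notMem, filter_min, ih, add_comm]
    congr 1
    exact Finset.sum_congr rfl fun b hb => by rw [filter_of_mem hb]

lemma sum_powersetCard_succ_Ico {M : Type*} [AddCommMonoid M] (l n k : ℕ)
    (F : Finset ℕ → M) :
    ∑ S ∈ (Finset.Ico l n).powersetCard (k + 1), F S =
      ∑ a ∈ Finset.Ico l n, ∑ T ∈ (Finset.Ico (a + 1) n).powersetCard k, F (insert a T) := by
  rw [sum_powersetCard_succ]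
  refine Finset.sum_congr rfl fun a ha => ?_
  have filter_lt : (Finset.Ico l n).filter (a < ·) = Finset.Ico (a + 1) n := by grind
  rw [filter_lt]

lemma sum_Ico_Ico_Ico_comm {M : Type*} [AddCommMonoid M] (n : ℕ) (f : ℕ → ℕ → ℕ → M) :
    ∑ a ∈ Finset.Ico 0 n, ∑ b ∈ Finset.Ico (a + 1) n, ∑ c ∈ Finset.Ico (b + 1) n, f a b c =
      ∑ c ∈ Finset.range n, ∑ b ∈ Finset.range c, ∑ a ∈ Finset.range b, f a b c := by
  simp only [Finset.range_eq_Ico]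
  rw [Finset.sum_Ico_Ico_comm',
    ← Finset.sum_Ico_Ico_comm' 0 n fun b c => ∑ a ∈ Finset.Ico 0 b, f a b c]
  exact Finset.sum_congr rfl fun b _ => Finset.sum_comm

lemma sum_powersetCard_range_of_forall_three_min {M : Type*} [AddCommMonoid M] (n k : ℕ)
    (F : Finset ℕ → M) (G : ℕ → ℕ → ℕ → M)
    (hFG : ∀ a b c T, a < b → b < c → (∀ t ∈ T, c < t) →
      F (insert a (insert b (insert c T))) = G a b c) :
    ∑ S ∈ (Finset.range n).powersetCard (k + 3), F S =
      ∑ c ∈ Finset.range n, (n - 1 - c).choose k •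
        ∑ b ∈ Finset.range c, ∑ a ∈ Finset.range b, G a b c := by
  simp only [Finset.smul_sum]
  rw [← sum_Ico_Ico_Ico_comm, Finset.range_eq_Ico, sum_powersetCard_succ_Ico]
  refine Finset.sum_congr rfl fun a _ => ?_
  rw [sum_powersetCard_succ_Ico]
  refine Finset.sum_congr rfl fun b hb => ?_
  rw [sum_powersetCard_succ_Ico]
  refine Finset.sum_congr rfl fun c hc => ?_
  have F_eq : ∀ T ∈ (Finset.Ico (c + 1) n).powersetCard k,
      F (insert a (insert b (insert c T))) = G a b c := fun T hT =>
    hFG a b c T (Finset.mem_Ico.1 hb).1 (Finset.mem_Ico.1 hc).1 fun t ht =>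
      (Finset.mem_Ico.1 ((Finset.mem_powersetCard.1 hT).1 ht)).1
  rw [Finset.sum_congr rfl F_eq, Finset.sum_const, Finset.card_powersetCard, Nat.card_Ico,
    add_comm c, Nat.sub_add_eq]

end SubsetSums

section DescStat

variable {m n : ℕ}

/-- The permutation listing the indices of `x` by decreasing value, so that `x (descPerm x k)` is
the order statistic `descStat x k`. -/
def descPerm (x : Fin m → ℝ) : Equiv.Perm (Fin m) := Fin.revPerm.trans (Tuple.sort x)

lemma antitone_comp_descPerm (x : Fin m → ℝ) : Antitone (x ∘ descPerm x) :=
  fun _ _ h => Tuple.monotone_sort x (Fin.rev_le_rev.2 h)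

lemma apply_descPerm (x : Fin m → ℝ) (k : Fin m) : x (descPerm x k) = descStat x k := by
  have rev_eq : k.rev = ⟨m - 1 - k, by omega⟩ := Fin.ext (by simp only [Fin.val_rev]; omega)
  simp [descStat, descPerm, rev_eq]

lemma descStat_lt_descStat {x : Fin m → ℝ} (hx : Function.Injective x) {i j : ℕ}
    (hij : i < j) (hj : j < m) : descStat x j < descStat x i := by
  have strictAnti : StrictAnti (x ∘ descPerm x) :=
    (antitone_comp_descPerm x).strictAnti_of_injective (hx.comp (descPerm x).injective)
  have := @strictAnti ⟨i, hij.trans hj⟩ ⟨j, hj⟩ hij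
  simpa only [Function.comp_apply, apply_descPerm] using this

lemma descStat_eq_getD (x : Fin m → ℝ) {l : List ℝ} (hl : l.Pairwise (· ≥ ·))
    (hlx : (l : Multiset ℝ) = Finset.univ.val.map x) (j : ℕ) :
    descStat x j = l.getD j 0 := by
  have ofFn_coe : (List.ofFn (x ∘ descPerm x) : Multiset ℝ) = Finset.univ.val.map x := by
    rw [← Fin.univ_val_map, ← Multiset.map_map, ← Equiv.coe_toEmbedding, ← Finset.map_val,
      Finset.map_univ_equiv]
  have l_eq : l = List.ofFn (x ∘ descPerm x) :=
    (Multiset.coe_eq_coe.1 (hlx.trans ofFn_coe.symm)).eq_of_pairwise' hl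
      (antitone_comp_descPerm x).sortedGE_ofFn.pairwise
  rcases lt_or_ge j m with hj | hj
  · simp [l_eq, hj, ← apply_descPerm x ⟨j, hj⟩]
  · simp [l_eq, hj, descStat]

lemma map_orderIsoOfFin_univ_val {α β : Type*} [LinearOrder α] (I : Finset α) (f : α → β) :
    (Finset.univ.val.map fun i => f (I.orderIsoOfFin rfl i)) = I.val.map f := by
  conv_rhs => rw [← I.map_orderEmbOfFin_univ rfl, Finset.map_val, Multiset.map_map]
  rfl

lemma descStat_subsample (X : Fin n → ℝ) (J : Finset (Fin n)) {I : Finset (Fin n)}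
    (hI : J.map (descPerm X).toEmbedding = I) (j : ℕ) :
    descStat (fun i => X (I.orderIsoOfFin rfl i)) j =
      ((J.map Fin.valEmbedding).sort.map (descStat X)).getD j 0 := by
  have sort_eq : (J.map Fin.valEmbedding).sort.map (descStat X) =
      J.sort.map (X ∘ descPerm X) := by
    rw [← (Fin.val_strictMono.strictMonoOn _).map_finsetSort, List.map_map]
    exact List.map_congr_left fun k _ => (apply_descPerm X k).symm
  rw [sort_eq]
  apply descStat_eq_getD
  · exact (J.pairwise_sort (· ≤ ·)).map _ fun _ _ h => antitone_comp_descPerm X h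
  · rw [map_orderIsoOfFin_univ_val, ← Multiset.map_coe, Finset.sort_eq, ← hI, Finset.map_val,
      Multiset.map_map, Equiv.coe_toEmbedding]

lemma Km_subsample {q : ℕ} (K : (Fin q → ℝ) → ℝ) (X : Fin n → ℝ) (J : Finset (Fin n))
    {I : Finset (Fin n)} (hI : J.map (descPerm X).toEmbedding = I) :
    Km K I.card (fun i => X (I.orderIsoOfFin rfl i)) =
      K fun j => ((J.map Fin.valEmbedding).sort.map (descStat X)).getD j 0 := by
  simp only [Km, descStat_subsample X J hI]

lemma UStat_eq_sum_ranks {q : ℕ} (K : (Fin q → ℝ) → ℝ) (m : ℕ) (X : Fin n → ℝ) :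
    UStat K m n X = ((n.choose m : ℝ))⁻¹ * ∑ S ∈ (Finset.range n).powersetCard m,
      K fun j => (S.sort.map (descStat X)).getD j 0 := by
  have univ_eq : (Finset.univ : Finset (Fin n)) =
      Finset.univ.map (descPerm X).toEmbedding := by simp
  have range_eq : Finset.range n = (Finset.univ : Finset (Fin n)).map Fin.valEmbedding := by
    rw [Fin.map_valEmbedding_univ, Nat.Iio_eq_range]
  unfold UStat
  rw [range_eq, Finset.powersetCard_map, Finset.sum_map]
  conv_lhs => rw [univ_eq, Finset.powersetCard_map, Finset.sum_map]
  congr 1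
  exact Finset.sum_congr rfl fun J _ => Km_subsample K X J rfl

lemma UStat_eq_sum_top_three (K : (Fin 3 → ℝ) → ℝ) (k : ℕ) (X : Fin n → ℝ) :
    UStat K (k + 3) n X = ((n.choose (k + 3) : ℝ))⁻¹ *
      ∑ c ∈ Finset.range n, ((n - 1 - c).choose k : ℝ) *
        ∑ b ∈ Finset.range c, ∑ a ∈ Finset.range b,
          K ![descStat X a, descStat X b, descStat X c] := by
  simp only [← nsmul_eq_mul (Nat.choose _ k)]
  rw [UStat_eq_sum_ranks, sum_powersetCard_range_of_forall_three_min]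
  intro a b c T hab hbc hT
  have sort_eq : (insert a (insert b (insert c T))).sort = a :: b :: c :: T.sort := by
    rw [Finset.sort_insert, Finset.sort_insert, Finset.sort_insert] <;> grind
  congr 1
  ext j
  fin_cases j <;> simp [sort_eq]

end DescStat

section TripleSums

lemma sum_range_choose_sub (n k : ℕ) :
    ∑ c ∈ Finset.range n, (n - 1 - c).choose k = n.choose (k + 1) := by
  rw [Finset.sum_range_reflect (fun i => i.choose k)]
  induction n with
  | zero => simp
  | succ n ih => rw [Finset.sum_range_succ, ih, Nat.choose_succ_succ, add_comm]

lemma sum_range_choose_mul_sum_range {R : Type*} [Semiring R] (n k : ℕ) (H : ℕ → R) :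
    ∑ c ∈ Finset.range n, ((n - 1 - c).choose k : R) * ∑ b ∈ Finset.range c, H b =
      ∑ b ∈ Finset.range n, ((n - 1 - b).choose (k + 1) : R) * H b := by
  simp only [Finset.mul_sum, Finset.range_eq_Ico]
  rw [← Finset.sum_Ico_Ico_comm']
  refine Finset.sum_congr rfl fun b _ => ?_
  rw [← Finset.sum_mul, Finset.sum_Ico_eq_sum_range, ← sum_range_choose_sub, Nat.cast_sum,
    Nat.sub_sub n 1 b, add_comm 1 b]
  congr! 4
  omega

lemma sum_range_sum_range_add {R : Type*} [Ring R] (n : ℕ) (g : ℕ → R) :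
    ∑ b ∈ Finset.range n, ∑ a ∈ Finset.range b, (g a + g b) =
      ((n : R) - 1) * ∑ a ∈ Finset.range n, g a := by
  induction n with
  | zero => simp
  | succ n ih =>
    rw [Finset.sum_range_succ, ih, Finset.sum_range_succ, Finset.sum_add_distrib]
    simp only [Finset.sum_const, Finset.card_range, nsmul_eq_mul]
    push_cast
    noncomm_ring

variable {𝕜 : Type*} [Field 𝕜] [CharZero 𝕜]

lemma two_mul_choose_succ_sub (N k : ℕ) (x : 𝕜) :
    2 * (N.choose (k + 1) : 𝕜) - (x - 1) * N.choose k =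
      N.choose k * (2 * (N + 1) / (k + 1) - (x + 1)) := by
  have choose_succ : (N.choose (k + 1) : 𝕜) * (k + 1) = N.choose k * (N - k) := by
    rcases le_or_gt k N with hk | hk
    · exact_mod_cast congrArg (Nat.cast (R := 𝕜)) (Nat.choose_succ_right_eq N k)
    · simp [Nat.choose_eq_zero_of_lt, hk, Nat.lt_succ_of_lt hk]
  have : (k : 𝕜) + 1 ≠ 0 := Nat.cast_add_one_ne_zero k
  field_simp
  linear_combination 2 * choose_succ

lemma sum_range_choose_mul_sum_spacings (n k : ℕ) (L : ℕ → ℕ → 𝕜) :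
    ∑ c ∈ Finset.range n, ((n - 1 - c).choose k : 𝕜) *
        ∑ b ∈ Finset.range c, ∑ a ∈ Finset.range b, (2 * L a b - L a c - L b c) =
      ∑ c ∈ Finset.range n, ((n - 1 - c).choose k : 𝕜) *
        (2 * ((n : 𝕜) - c) / (k + 1) - (c + 1)) * ∑ a ∈ Finset.range c, L a c := by
  have sum_triples (c : ℕ) :
      ∑ b ∈ Finset.range c, ∑ a ∈ Finset.range b, (2 * L a b - L a c - L b c) =
        ∑ b ∈ Finset.range c, 2 * ∑ a ∈ Finset.range b, L a b -
          ((c : 𝕜) - 1) * ∑ a ∈ Finset.range c, L a c := by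
    rw [← sum_range_sum_range_add c fun a => L a c]
    simp only [sub_sub, Finset.sum_sub_distrib, Finset.mul_sum]
  rw [Finset.sum_congr rfl fun c _ => (congrArg _ (sum_triples c)).trans (mul_sub _ _ _),
    Finset.sum_sub_distrib, sum_range_choose_mul_sum_range, ← Finset.sum_sub_distrib]
  refine Finset.sum_congr rfl fun c hc => ?_
  have cast_rank : (n : 𝕜) - c = ((n - 1 - c : ℕ) : 𝕜) + 1 := by
    rw [← Nat.cast_sub (Finset.mem_range.1 hc).le]
    norm_cast
    grind
  rw [cast_rank, ← two_mul_choose_succ_sub]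
  ring

end TripleSums

lemma KP2_eq_of_lt {y₀ y₁ y₂ : ℝ} (h₁ : y₁ < y₀) (h₂ : y₂ < y₁) :
    KP2 ![y₀, y₁, y₂] =
      2 * Real.log (y₀ - y₁) - Real.log (y₀ - y₂) - Real.log (y₁ - y₂) := by
  have h₀₁ : y₀ - y₁ ≠ 0 := by linarith
  have h₀₂ : y₀ - y₂ ≠ 0 := by linarith
  have h₁₂ : y₁ - y₂ ≠ 0 := by linarith
  simp only [KP2, Matrix.cons_val, Real.log_div h₀₁ h₁₂, Real.log_div h₀₂ h₁₂]
  ring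

lemma sum_Icc_one_eq_sum_range {M : Type*} [AddCommMonoid M] (n : ℕ) (f : ℕ → M) :
    ∑ j ∈ Finset.Icc 1 n, f j = ∑ c ∈ Finset.range n, f (c + 1) := by
  rw [Finset.range_eq_Ico, Finset.sum_Ico_add', zero_add, Finset.Ico_add_one_right_eq_Icc]

/-- The terms `j = 1` and `j > n - k` absent on the left vanish on the right: the former has an
empty inner sum, the latter have a zero binomial coefficient. -/
lemma sum_Icc_two_eq_sum_range {R : Type*} [Semiring R] (n k : ℕ) (w : ℕ → R)
    (f : ℕ → ℕ → R) :
    ∑ j ∈ Finset.Icc 2 (n - k), ((n - j).choose k : R) * w j *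
        ∑ i ∈ Finset.Icc 1 (j - 1), f (i - 1) (j - 1) =
      ∑ c ∈ Finset.range n, ((n - 1 - c).choose k : R) * w (c + 1) *
        ∑ a ∈ Finset.range c, f a c := by
  have Icc_subset : Finset.Icc 2 (n - k) ⊆ Finset.Icc 1 n :=
    Finset.Icc_subset_Icc one_le_two (Nat.sub_le n k)
  rw [Finset.sum_subset Icc_subset, sum_Icc_one_eq_sum_range]
  · simp only [Nat.add_sub_cancel, sum_Icc_one_eq_sum_range, Nat.sub_sub, add_comm 1]
  · intro j hj hj'
    rcases Nat.lt_or_ge j 2 with hj₂ | hj₂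
    · obtain rfl : j = 1 := by grind
      simp
    · rw [Nat.choose_eq_zero_of_lt (by grind), Nat.cast_zero, zero_mul, zero_mul]

lemma UStat_KP2_eq_sum_range {n : ℕ} (k : ℕ) {X : Fin n → ℝ} (hX : Function.Injective X) :
    UStat KP2 (k + 3) n X = ((n.choose (k + 3) : ℝ))⁻¹ *
      ∑ c ∈ Finset.range n, ((n - 1 - c).choose k : ℝ) *
        (2 * ((n : ℝ) - c) / (k + 1) - (c + 1)) *
          ∑ a ∈ Finset.range c, Real.log (descStat X a - descStat X c) := by
  rw [UStat_eq_sum_top_three, ← sum_range_choose_mul_sum_spacings n k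
    fun a b => Real.log (descStat X a - descStat X b)]
  congr! 6 with c hc b hb a ha
  rw [Finset.mem_range] at hc hb ha
  exact KP2_eq_of_lt (descStat_lt_descStat hX ha (hb.trans hc)) (descStat_lt_descStat hX hb hc)

/-- Lemma: explicit formula for the extreme U-Pickands statistic.
For pairwise distinct reals `X_1,…,X_n` and `3 ≤ m ≤ n`,
`U^m_{n,P} = Σ_{j=2}^{n-m+3} [C(n-j,m-3)/C(n,m)] (2(n-j+1)/(m-2) - j)
  Σ_{i=1}^{j-1} ln(X_{n-i+1:n} - X_{n-j+1:n})`. -/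
theorem pickands_U_statistic_explicit
    (n m : ℕ) (hm : 3 ≤ m) (hmn : m ≤ n)
    (X : Fin n → ℝ) (hX : Function.Injective X) :
    UStat KP2 m n X =
      ∑ j ∈ Finset.Icc 2 (n - m + 3),
        (((n - j).choose (m - 3) : ℝ) / (n.choose m : ℝ)) *
          (2 * ((n : ℝ) - (j : ℝ) + 1) / ((m : ℝ) - 2) - (j : ℝ)) *
          ∑ i ∈ Finset.Icc 1 (j - 1),
            Real.log (descStat X (i - 1) - descStat X (j - 1)) := by
  obtain ⟨k, rfl⟩ := Nat.exists_eq_add_of_le' hm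
  have last_eq : n - (k + 3) + 3 = n - k := by omega
  have den_eq : ((k + 3 : ℕ) : ℝ) - 2 = k + 1 := by push_cast; ring
  have rank_eq (c : ℕ) : (n : ℝ) - (c + 1) + 1 = n - c := by ring
  have sum_eq := sum_Icc_two_eq_sum_range n k (fun j => 2 * ((n : ℝ) - j + 1) / (k + 1) - j)
    (fun a b => Real.log (descStat X a - descStat X b))
  simp only [Nat.cast_add_one, rank_eq] at sum_eq
  rw [UStat_KP2_eq_sum_range k hX, ← sum_eq, last_eq, den_eq, Nat.add_sub_cancel, Finset.mul_sum]
  exact Finset.sum_congr rfl fun j _ => by ring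

end
end
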